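/- arXiv:1611.05785 — 3 statements merged into one kernel-verified Lean document; each statement's English description precedes it below -/
import Mathlib

section
/- Let p > q be odd primes and suppose Q is a right Bol loop of order pq containing a normal subloop of order q. Then Q is associative (hence a group). -/
/-- A right Bol loop. -/
class RightBolLoop (Q : Type*) extends Mul Q, One Q, Inv Q where
  one_mul : ∀ a : Q, 1 * a = a
  mul_one : ∀ a : Q, a * 1 = a
  mulLeft_bij : ∀ a : Q, Function.Bijective (fun x : Q => a * x)
  mulRight_bij : ∀ a : Q, Function.Bijective (fun x : Q => x * a)
  mul_inv : ∀ a : Q, a * a⁻¹ = 1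
  inv_mul : ∀ a : Q, a⁻¹ * a = 1
  rbol : ∀ w u v : Q, ((w * u) * v) * u = w * ((u * v) * u)

/-- A subloop: a subset containing the identity and closed under
multiplication and both divisions. -/
structure Subloop (Q : Type*) [RightBolLoop Q] where
  carrier : Set Q
  one_mem : (1 : Q) ∈ carrier
  mul_mem : ∀ a ∈ carrier, ∀ b ∈ carrier, a * b ∈ carrier
  ldiv_mem : ∀ a ∈ carrier, ∀ b ∈ carrier, ∀ x : Q, a * x = b → x ∈ carrier
  rdiv_mem : ∀ a ∈ carrier, ∀ b ∈ carrier, ∀ x : Q, x * a = b → x ∈ carrier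

/-- A subloop `S` is normal iff `xS = Sx`, `(xS)y = x(Sy)` and
`x(yS) = (xy)S` for all `x, y`. -/
def IsNormalSubloop {Q : Type*} [RightBolLoop Q] (S : Set Q) : Prop :=
  (∀ x : Q, (fun s => x * s) '' S = (fun s => s * x) '' S) ∧
  (∀ x y : Q, (fun s => (x * s) * y) '' S = (fun s => x * (s * y)) '' S) ∧
  (∀ x y : Q, (fun s => x * (y * s)) '' S = (fun s => (x * y) * s) '' S)

/-- A permutation all of whose powers are trivial or fixed point free has order dividing the
number of points. -/
theorem Equiv.Perm.orderOf_dvd_card_of_semiregular {X : Type*} [Fintype X]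
    (σ : Equiv.Perm X) (h : ∀ (n : ℕ) (a : X), (σ ^ n) a = a → σ ^ n = 1) :
    orderOf σ ∣ Fintype.card X := by
  classical
  have hfree : ∀ a : X, MulAction.stabilizer (Subgroup.zpowers σ) a = ⊥ := by
    intro a
    rw [Subgroup.eq_bot_iff_forall]
    rintro ⟨g, hg⟩ hga
    obtain ⟨n, rfl⟩ := (mem_powers_iff_mem_zpowers.mpr hg)
    exact Subtype.ext (h n a hga)
  have e := MulAction.selfEquivOrbitsQuotientProd hfree
  rw [← Nat.card_zpowers, ← Nat.card_eq_fintype_card, Nat.card_congr e, Nat.card_prod]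
  exact Dvd.intro_left _ rfl

theorem exists_mul_eq_mul_add_one {m n : ℕ} (hmn : m.Coprime n) (hn : 1 < n) :
    ∃ k t : ℕ, m * k = n * t + 1 := by
  obtain ⟨k, hk⟩ := Nat.exists_mul_mod_eq_one_of_coprime hmn hn
  exact ⟨k, m * k / n, by rw [← hk.2, Nat.div_add_mod]⟩

theorem coprime_of_pos_of_lt_prime {i p : ℕ} (hp : p.Prime) (h0 : 0 < i) (h : i < p) :
    i.Coprime p :=
  (Nat.coprime_of_lt_prime h0.ne' h hp).symm

/-- If `a * x ^ i * a` and `a * x ^ j * a` are the powers `y ^ i` and `y ^ j`, where `x` and `y`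
have exponent `p` and `i < j < p`, then `a` squares to the identity. -/
theorem sq_eq_one_of_conj_pow {G : Type*} [Group G] {a x y : G} {p i j : ℕ} (hp : p.Prime)
    (hx : x ^ p = 1) (hy : y ^ p = 1) (hij : i < j) (hj : j < p)
    (hi' : a * x ^ i * a = y ^ i) (hj' : a * x ^ j * a = y ^ j) : a ^ 2 = 1 := by
  obtain ⟨d, rfl⟩ := Nat.exists_eq_add_of_lt hij
  obtain ⟨e, t, he⟩ := exists_mul_eq_mul_add_one
    (coprime_of_pos_of_lt_prime hp (Nat.succ_pos d) (by omega)) hp.one_lt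
  have h1 : y ^ (d + 1) = a⁻¹ * x ^ (d + 1) * a := by
    rw [add_assoc, pow_add, pow_add y, ← hi'] at hj'
    apply mul_left_cancel (a := a * x ^ i * a)
    rw [← hj']
    group
  have h2 : y = a⁻¹ * x * a := by
    have hc (z : G) (n : ℕ) : (a⁻¹ * z * a) ^ n = a⁻¹ * z ^ n * a := by
      simpa using conj_pow (a := a⁻¹) (b := z) (i := n)
    have hpow (z : G) (hz : z ^ p = 1) : (z ^ (d + 1)) ^ e = z := by
      rw [← pow_mul, he, pow_succ, pow_mul, hz, one_pow, one_mul]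
    rw [← hpow y hy, h1, hc, hpow x hx]
  have h3 : y ^ i = a⁻¹ * x ^ i * a := by
    rw [h2]
    simpa using conj_pow (a := a⁻¹) (b := x) (i := i)
  rw [← hi'] at h3
  have h4 : a = a⁻¹ := mul_right_cancel (mul_right_cancel h3)
  rw [pow_two]
  nth_rewrite 2 [h4]
  exact mul_inv_cancel a

namespace RightBolLoop

variable {Q : Type*} [RightBolLoop Q]

theorem mul_right_cancel {a b c : Q} (h : a * c = b * c) : a = b := (mulRight_bij c).1 h

theorem mul_left_cancel {a b c : Q} (h : c * a = c * b) : a = b := (mulLeft_bij c).1 h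

theorem mul_mul_inv (w u : Q) : (w * u) * u⁻¹ = w := by
  apply mul_right_cancel (c := u)
  rw [rbol, mul_inv, one_mul]

theorem mul_inv_mul (w u : Q) : (w * u⁻¹) * u = w := by
  obtain ⟨v, rfl⟩ := (mulRight_bij u).2 w
  change ((v * u) * u⁻¹) * u = v * u
  rw [mul_mul_inv]

/-- Right translation as a permutation. -/
def rightTranslation (x : Q) : Equiv.Perm Q where
  toFun w := w * x
  invFun w := w * x⁻¹
  left_inv w := mul_mul_inv w x
  right_inv w := mul_inv_mul w x

local notation "R" => rightTranslation

@[simp] theorem rightTranslation_apply (x w : Q) : R x w = w * x := rfl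

theorem rightTranslation_injective : Function.Injective (R : Q → Equiv.Perm Q) := by
  intro x y h
  simpa [one_mul] using congrArg (fun f : Equiv.Perm Q => f 1) h

theorem rightTranslation_one : R (1 : Q) = 1 := by
  ext w
  simp [mul_one]

theorem rightTranslation_bol (u v : Q) : R u * R v * R u = R ((u * v) * u) := by
  ext w
  simp [rbol]

/-- The powers of an element of a right Bol loop. -/
def npow (x : Q) (n : ℕ) : Q := (R x ^ n) 1

theorem rightTranslation_npow (x : Q) (n : ℕ) : R (npow x n) = R x ^ n := by
  have key : ∀ n : ℕ, ∃ y : Q, R y = R x ^ n := by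
    intro n
    induction n using Nat.twoStepInduction with
    | zero => exact ⟨1, by rw [rightTranslation_one, pow_zero]⟩
    | one => exact ⟨x, by rw [pow_one]⟩
    | more n ih _ =>
      obtain ⟨y, hy⟩ := ih
      refine ⟨(x * y) * x, ?_⟩
      rw [← rightTranslation_bol, hy, pow_succ, pow_succ']
  obtain ⟨y, hy⟩ := key n
  have hyn : npow x n = y := by
    rw [npow, ← hy, rightTranslation_apply, one_mul]
  rw [hyn, hy]

theorem npow_add (x : Q) (m n : ℕ) : npow x m * npow x n = npow x (m + n) := by
  rw [← rightTranslation_apply, rightTranslation_npow, npow, npow, add_comm, pow_add]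
  rfl

theorem npow_succ (x : Q) (n : ℕ) : npow x (n + 1) = npow x n * x := by
  rw [npow, pow_succ']
  rfl

theorem npow_mul (x : Q) (m n : ℕ) : npow x (m * n) = npow (npow x m) n := by
  apply rightTranslation_injective
  simp only [rightTranslation_npow, pow_mul]

theorem npow_zero (x : Q) : npow x 0 = 1 := rfl

theorem npow_one (x : Q) : npow x 1 = x := one_mul x

theorem npow_eq_one_iff (x : Q) (n : ℕ) : npow x n = 1 ↔ R x ^ n = 1 := by
  rw [← rightTranslation_npow, ← rightTranslation_one]
  exact rightTranslation_injective.eq_iff.symm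

theorem orderOf_rightTranslation_dvd_card [Fintype Q] (x : Q) :
    orderOf (R x) ∣ Fintype.card Q := by
  apply Equiv.Perm.orderOf_dvd_card_of_semiregular
  intro n a h
  rw [← rightTranslation_npow, rightTranslation_apply] at h
  rw [← npow_eq_one_iff]
  exact mul_left_cancel (h.trans (mul_one a).symm)

/-- A right Bol loop whose order is attained by an element is associative. -/
theorem mul_assoc_of_orderOf_eq_card [Fintype Q] (x : Q)
    (hx : orderOf (R x) = Fintype.card Q) (a b c : Q) : (a * b) * c = a * (b * c) := by
  have hinj : Function.Injective (fun i : Fin (orderOf (R x)) => npow x i) := by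
    intro i j hij
    have h : R x ^ (i : ℕ) = R x ^ (j : ℕ) := by
      rw [← rightTranslation_npow, ← rightTranslation_npow]
      exact congrArg _ hij
    exact Fin.ext (pow_injOn_Iio_orderOf i.2 j.2 h)
  have hsurj := ((Fintype.bijective_iff_injective_and_card _).2
    ⟨hinj, by rw [Fintype.card_fin, hx]⟩).2
  obtain ⟨i, rfl⟩ := hsurj a
  obtain ⟨j, rfl⟩ := hsurj b
  obtain ⟨k, rfl⟩ := hsurj c
  simp only [npow_add, add_assoc]

/-- The left coset `aS`. -/
def leftCoset (S : Set Q) (a : Q) : Set Q := (fun s => a * s) '' S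

section Coset

variable {S : Subloop Q}

theorem leftCoset_of_mem {s : Q} (hs : s ∈ S.carrier) : leftCoset S.carrier s = S.carrier := by
  apply Set.Subset.antisymm
  · rintro _ ⟨t, ht, rfl⟩
    exact S.mul_mem s hs t ht
  · intro t ht
    obtain ⟨u, hu⟩ := (mulLeft_bij s).2 t
    exact ⟨u, S.ldiv_mem s hs t ht u hu, hu⟩

theorem mem_leftCoset_self (a : Q) : a ∈ leftCoset S.carrier a := ⟨1, S.one_mem, mul_one a⟩

theorem leftCoset_mul (hn : IsNormalSubloop S.carrier) (a b : Q) :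
    leftCoset S.carrier (a * b) = (fun t => a * t) '' leftCoset S.carrier b := by
  rw [leftCoset, ← hn.2.2, leftCoset, Set.image_image]

theorem leftCoset_mul' (hn : IsNormalSubloop S.carrier) (a b : Q) :
    leftCoset S.carrier (a * b) = (fun t => t * b) '' leftCoset S.carrier a := by
  rw [leftCoset_mul hn, leftCoset, hn.1, leftCoset, Set.image_image, Set.image_image, hn.2.1]

theorem leftCoset_eq_iff_mem (hn : IsNormalSubloop S.carrier) {a b : Q} :
    leftCoset S.carrier a = leftCoset S.carrier b ↔ a ∈ leftCoset S.carrier b := by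
  constructor
  · intro h
    rw [← h]
    exact mem_leftCoset_self a
  · rintro ⟨s, hs, rfl⟩
    simp only [leftCoset_mul hn, leftCoset_of_mem hs]
    rfl

theorem mem_iff_leftCoset_eq (hn : IsNormalSubloop S.carrier) {a : Q} :
    a ∈ S.carrier ↔ leftCoset S.carrier a = leftCoset S.carrier 1 := by
  rw [leftCoset_eq_iff_mem hn, leftCoset_of_mem S.one_mem]

theorem leftCoset_mul_congr (hn : IsNormalSubloop S.carrier) {a a' b b' : Q}
    (ha : leftCoset S.carrier a = leftCoset S.carrier a')
    (hb : leftCoset S.carrier b = leftCoset S.carrier b') :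
    leftCoset S.carrier (a * b) = leftCoset S.carrier (a' * b') := by
  rw [leftCoset_mul' hn, ha, ← leftCoset_mul' hn, leftCoset_mul hn, hb, ← leftCoset_mul hn]

theorem leftCoset_npow_congr (hn : IsNormalSubloop S.carrier) {a b : Q}
    (h : leftCoset S.carrier a = leftCoset S.carrier b) (n : ℕ) :
    leftCoset S.carrier (npow a n) = leftCoset S.carrier (npow b n) := by
  induction n with
  | zero => rfl
  | succ n ih =>
    rw [npow_succ, npow_succ]
    exact leftCoset_mul_congr hn ih h

theorem npow_mem {a : Q} (ha : a ∈ S.carrier) (n : ℕ) : npow a n ∈ S.carrier := by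
  induction n with
  | zero => exact S.one_mem
  | succ n ih =>
    rw [npow_succ]
    exact S.mul_mem _ ih _ ha

theorem ncard_leftCoset (a : Q) : (leftCoset S.carrier a).ncard = S.carrier.ncard :=
  Set.ncard_image_of_injective _ (mulLeft_bij a).1

/-- The `m`th power of every element lies in a normal subloop of index `m`. -/
theorem npow_mem_of_card_eq [Fintype Q] (hn : IsNormalSubloop S.carrier) {m : ℕ}
    (hm : Fintype.card Q = m * S.carrier.ncard) (x : Q) : npow x m ∈ S.carrier := by
  classical
  let r : Setoid Q := Setoid.ker (leftCoset S.carrier)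
  let τ : Equiv.Perm (Quotient r) := Quotient.congr (R x) (by
    intro a b
    change leftCoset S.carrier a = leftCoset S.carrier b ↔
      leftCoset S.carrier (a * x) = leftCoset S.carrier (b * x)
    refine ⟨fun h => leftCoset_mul_congr hn h rfl, fun h => ?_⟩
    simpa only [mul_mul_inv] using leftCoset_mul_congr hn h (rfl : _ = leftCoset S.carrier x⁻¹))
  have hτ : ∀ (n : ℕ) (a : Q), (τ ^ n) (Quotient.mk r a) = Quotient.mk r ((R x ^ n) a) := by
    intro n
    induction n with
    | zero => intro a; rfl
    | succ n ih =>
      intro a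
      rw [pow_succ, pow_succ, Equiv.Perm.mul_apply, Equiv.Perm.mul_apply, ← ih]
      rfl
  have hcard : Fintype.card (Quotient r) = m := by
    have hpos : 0 < S.carrier.ncard := (Set.ncard_pos (Set.toFinite _)).2 ⟨1, S.one_mem⟩
    apply Nat.eq_of_mul_eq_mul_right hpos
    rw [← hm, ← Finset.card_univ (α := Q),
      Finset.card_eq_sum_card_fiberwise (f := Quotient.mk r) (t := Finset.univ) (by simp),
      Finset.sum_const_nat (m := S.carrier.ncard), Finset.card_univ]
    intro y _
    induction y using Quotient.inductionOn with
    | h b =>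
      rw [← ncard_leftCoset b, ← Set.ncard_coe_finset]
      congr 1
      ext a
      simp only [Finset.coe_filter, Finset.mem_univ, true_and, Set.mem_ofPred_eq]
      rw [← leftCoset_eq_iff_mem hn]
      exact Quotient.eq
  have hdvd : orderOf τ ∣ m := by
    rw [← hcard]
    apply Equiv.Perm.orderOf_dvd_card_of_semiregular
    intro n y
    induction y using Quotient.inductionOn with
    | h b =>
      intro h
      rw [hτ, ← rightTranslation_npow] at h
      have h' : b * npow x n ∈ leftCoset S.carrier b :=
        (leftCoset_eq_iff_mem hn).1 (Quotient.eq.1 h)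
      obtain ⟨s, hs, hbs⟩ := h'
      have hxn : npow x n ∈ S.carrier := mul_left_cancel hbs ▸ hs
      ext z
      induction z using Quotient.inductionOn with
      | h a =>
        rw [hτ, ← rightTranslation_npow]
        refine Quotient.eq.2 ((leftCoset_eq_iff_mem hn).2 ⟨_, hxn, rfl⟩)
  have h1 := hτ m 1
  rw [orderOf_dvd_iff_pow_eq_one.1 hdvd] at h1
  exact (mem_iff_leftCoset_eq hn).2 (Quotient.eq.1 h1).symm

/-- If coprime powers of an element lie in a normal subloop, then so does the element. -/
theorem mem_of_npow_mem_of_coprime (hn : IsNormalSubloop S.carrier) {x : Q} {m n : ℕ}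
    (hmn : m.Coprime n) (h1 : 1 < n) (hm : npow x m ∈ S.carrier) (hx : npow x n ∈ S.carrier) :
    x ∈ S.carrier := by
  obtain ⟨k, t, hk⟩ := exists_mul_eq_mul_add_one hmn h1
  have h := npow_mem hm k
  rw [← npow_mul, hk, npow_succ, npow_mul, mem_iff_leftCoset_eq hn] at h
  rw [mem_iff_leftCoset_eq hn, ← h,
    leftCoset_mul_congr hn ((mem_iff_leftCoset_eq hn).1 (npow_mem hx t)) rfl, one_mul]

end Coset

/-- If every element outside a normal subloop `S` has prime exponent `p`, where `p` exceeds the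
order of `S` by at least two, then every element of `S` squares to the identity. -/
theorem rightTranslation_sq_eq_one [Finite Q] {S : Subloop Q}
    (hn : IsNormalSubloop S.carrier) {p : ℕ} (hp : p.Prime)
    (hlt : S.carrier.ncard < p - 1) (h : ∀ x ∉ S.carrier, npow x p = 1)
    {x c : Q} (hx : x ∉ S.carrier) (hc : c ∈ S.carrier) : R c ^ 2 = 1 := by
  classical
  let u : ℕ → Q := fun i => (c * npow x i) * c
  have hc1 := (mem_iff_leftCoset_eq hn).1 hc
  have hu (i : ℕ) : leftCoset S.carrier (u i) = leftCoset S.carrier (npow x i) := by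
    change leftCoset S.carrier ((c * npow x i) * c) = _
    rw [leftCoset_mul_congr hn (leftCoset_mul_congr hn hc1 rfl) hc1, one_mul, mul_one]
  have hup (i : ℕ) (hi : i ∈ Finset.Icc 1 (p - 1)) : npow (u i) p = 1 := by
    rw [Finset.mem_Icc] at hi
    apply h
    rw [mem_iff_leftCoset_eq hn, hu, ← mem_iff_leftCoset_eq hn]
    intro hxi
    refine hx (mem_of_npow_mem_of_coprime hn (coprime_of_pos_of_lt_prime hp hi.1 (by omega))
      hp.one_lt hxi ?_)
    rw [h x hx]
    exact S.one_mem
  have hf (i : ℕ) (hi : i ∈ Finset.Icc 1 (p - 1)) :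
      ∃ y ∈ leftCoset S.carrier x, npow y p = 1 ∧ npow y i = u i := by
    have hi' := Finset.mem_Icc.1 hi
    obtain ⟨k, t, hk⟩ := exists_mul_eq_mul_add_one
      (coprime_of_pos_of_lt_prime hp hi'.1 (by omega)) hp.one_lt
    have hpt (z : Q) (hz : npow z p = 1) : npow z (i * k) = z := by
      rw [npow_eq_one_iff] at hz
      apply rightTranslation_injective
      rw [rightTranslation_npow, hk, pow_succ, pow_mul, hz, one_pow, _root_.one_mul]
    refine ⟨npow (u i) k, ?_, ?_, ?_⟩
    · rw [← leftCoset_eq_iff_mem hn, leftCoset_npow_congr hn (hu i), ← npow_mul, hpt x (h x hx)]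
    · have hi1 := hup i hi
      rw [npow_eq_one_iff] at hi1 ⊢
      rw [rightTranslation_npow, ← pow_mul, mul_comm, pow_mul, hi1, one_pow]
    · rw [← npow_mul, mul_comm, hpt _ (hup i hi)]
  choose! f hfS hfp hfu using hf
  have hcard : (leftCoset S.carrier x).toFinite.toFinset.card < (Finset.Icc 1 (p - 1)).card := by
    rwa [← Set.ncard_eq_toFinset_card, ncard_leftCoset, Nat.card_Icc, Nat.add_sub_cancel]
  obtain ⟨i, hi, j, hj, hne, hij⟩ := Finset.exists_ne_map_eq_of_card_lt_of_maps_to hcard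
    (f := f) (fun i hi => by simpa using hfS i hi)
  have key (i : ℕ) (hi : i ∈ Finset.Icc 1 (p - 1)) : R c * R x ^ i * R c = R (f i) ^ i := by
    rw [← rightTranslation_npow, ← rightTranslation_npow, hfu i hi, rightTranslation_bol]
  have hxp := (npow_eq_one_iff x p).1 (h x hx)
  have hyp := (npow_eq_one_iff _ p).1 (hfp i hi)
  have hki := key i hi
  have hkj := key j hj
  rw [← hij] at hkj
  rw [Finset.mem_Icc] at hi hj
  rcases lt_or_gt_of_ne hne with hlt' | hlt'
  · exact sq_eq_one_of_conj_pow hp hxp hyp hlt' (by omega) hki hkj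
  · exact sq_eq_one_of_conj_pow hp hxp hyp hlt' (by omega) hkj hki

end RightBolLoop

open RightBolLoop in
/-- Let `p > q` be odd primes and `Q` a right Bol loop of order `pq`
containing a normal subloop of order `q`. Then `Q` is associative. -/
theorem stmt4 {p q : ℕ} (hp : p.Prime) (hq : q.Prime) (hpo : Odd p) (hqo : Odd q)
    (hlt : q < p) (Q : Type*) [RightBolLoop Q] [Fintype Q]
    (hcard : Fintype.card Q = p * q)
    (S : Subloop Q) (hnorm : IsNormalSubloop S.carrier)
    (hS : S.carrier.ncard = q) :
    ∀ a b c : Q, (a * b) * c = a * (b * c) := by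
  have hq_lt : q < p * q := lt_mul_of_one_lt_left hq.pos hp.one_lt
  by_cases h : ∀ x ∉ S.carrier, npow x p = 1
  · exfalso
    obtain ⟨x, hx⟩ : ∃ x, x ∉ S.carrier := by
      by_contra! hall
      rw [Set.eq_univ_of_forall hall, Set.ncard_univ, Nat.card_eq_fintype_card, hcard] at hS
      omega
    obtain ⟨c, hc, hc1⟩ := Set.exists_ne_of_one_lt_ncard (hS ▸ hq.one_lt) (1 : Q)
    have hlt' : S.carrier.ncard < p - 1 := by
      obtain ⟨m, rfl⟩ := hpo
      obtain ⟨n, rfl⟩ := hqo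
      omega
    have hsq := rightTranslation_sq_eq_one hnorm hp hlt' h hx hc
    have hodd : Nat.Coprime 2 (p * q) := (hpo.mul hqo).coprime_two_left
    have hone : orderOf (rightTranslation c) = 1 :=
      Nat.eq_one_of_dvd_coprimes hodd (orderOf_dvd_of_pow_eq_one hsq)
        (hcard ▸ orderOf_rightTranslation_dvd_card c)
    rw [orderOf_eq_one_iff, ← rightTranslation_one] at hone
    exact hc1 (rightTranslation_injective hone)
  · push Not at h
    obtain ⟨x, hx, hxp⟩ := h
    have hdvd := orderOf_rightTranslation_dvd_card x
    have hp' : ¬ orderOf (rightTranslation x) ∣ p := by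
      rwa [orderOf_dvd_iff_pow_eq_one, ← npow_eq_one_iff]
    have hq' : ¬ orderOf (rightTranslation x) ∣ q := by
      rw [orderOf_dvd_iff_pow_eq_one, ← npow_eq_one_iff]
      intro hxq
      refine hx (mem_of_npow_mem_of_coprime hnorm ((Nat.coprime_primes hq hp).2 hlt.ne) hp.one_lt
        ?_ (npow_mem_of_card_eq hnorm (hS ▸ hcard) x))
      rw [hxq]
      exact S.one_mem
    apply mul_assoc_of_orderOf_eq_card x
    rw [hcard] at hdvd ⊢
    obtain ⟨a, b, ha, hb, hab⟩ := exists_dvd_and_dvd_of_dvd_mul hdvd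
    rw [hab] at hp' hq' ⊢
    rcases (Nat.dvd_prime hp).1 ha with rfl | rfl <;>
      rcases (Nat.dvd_prime hq).1 hb with rfl | rfl <;> simp_all
end

section
/- Let p > q be odd primes. If q does not divide p^2 - 1, then GL(2, F_p) has no subgroup isomorphic to the dihedral group D_{2q} of order 2q. If q divides p^2 - 1, then any two subgroups of GL(2, F_p) isomorphic to D_{2q} are conjugate in GL(2, F_p). -/
open Matrix

/-- A `2 × 2` matrix of determinant one with an eigenvalue `l` has trace `l + l⁻¹`. -/
theorem Matrix.sq_sub_trace_mul_eigenvalue {K : Type*} [Field K] (M : Matrix (Fin 2) (Fin 2) K)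
    (hM : M.det = 1) (l : K) {v : Fin 2 → K} (hv : v ≠ 0) (h : M *ᵥ v = l • v) :
    l ^ 2 - M.trace * l + 1 = 0 := by
  have h0 : (M - l • (1 : Matrix (Fin 2) (Fin 2) K)).det = 0 := by
    refine Matrix.exists_mulVec_eq_zero_iff.1 ⟨v, hv, ?_⟩
    rw [Matrix.sub_mulVec, h, Matrix.smul_mulVec, Matrix.one_mulVec, sub_self]
  simp only [Matrix.det_fin_two, Matrix.trace_fin_two, Matrix.sub_apply, Matrix.smul_apply,
    Matrix.one_apply, smul_eq_mul] at *
  simp at h0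
  linear_combination h0 - hM

theorem Matrix.pow_mulVec_of_eigenvector {K n : Type*} [Field K] [Fintype n] [DecidableEq n]
    {M : Matrix n n K} {l : K} {v : n → K} (h : M *ᵥ v = l • v) (k : ℕ) :
    (M ^ k) *ᵥ v = l ^ k • v := by
  induction k with
  | zero => simp
  | succ k ih =>
    rw [pow_succ, ← Matrix.mulVec_mulVec, h, Matrix.mulVec_smul, ih, smul_smul, pow_succ,
      mul_comm]

theorem Matrix.exists_eigenvector {K n : Type*} [Field K] [IsAlgClosed K] [Fintype n]
    [DecidableEq n] [Nonempty n] (M : Matrix n n K) :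
    ∃ (l : K) (v : n → K), v ≠ 0 ∧ M *ᵥ v = l • v := by
  obtain ⟨l, hl⟩ := Module.End.exists_eigenvalue (Matrix.toLin' M)
  obtain ⟨v, hv⟩ := hl.exists_hasEigenvector
  exact ⟨l, v, hv.2, by simpa using hv.apply_eq_smul⟩

/-- Two matrices of determinant one and prime order `q` over a field, neither having trace two,
have the same trace up to replacing the first one by a power. -/
theorem Matrix.exists_trace_pow_eq {F : Type*} [Field F] {q : ℕ} (hq : q.Prime)
    {M N : Matrix (Fin 2) (Fin 2) F} (hM : M.det = 1) (hN : N.det = 1)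
    (hMq : M ^ q = 1) (hNq : N ^ q = 1) (hMt : M.trace ≠ 2) :
    ∃ k : ℕ, (M ^ k).trace = N.trace := by
  let K := AlgebraicClosure F
  let f : F →+* K := algebraMap F K
  have key : ∀ A : Matrix (Fin 2) (Fin 2) F, A.det = 1 → A ^ q = 1 →
      ∃ l : K, l ^ q = 1 ∧ ∀ k : ℕ, (l ^ k) ^ 2 - f (A ^ k).trace * l ^ k + 1 = 0 := by
    intro A hA hAq
    obtain ⟨l, v, hv, h⟩ := Matrix.exists_eigenvector (f.mapMatrix A)
    refine ⟨l, ?_, fun k => ?_⟩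
    · have h1 := Matrix.pow_mulVec_of_eigenvector h q
      rw [← map_pow, hAq, map_one, Matrix.one_mulVec] at h1
      have h2 : (l ^ q - 1) • v = 0 := by rw [sub_smul, ← h1, one_smul, sub_self]
      exact sub_eq_zero.1 ((smul_eq_zero.1 h2).resolve_right hv)
    · have h1 := Matrix.pow_mulVec_of_eigenvector h k
      have h2 := Matrix.sq_sub_trace_mul_eigenvalue _
        (by rw [← map_pow, ← RingHom.map_det, Matrix.det_pow, hA, one_pow, map_one]) _ hv h1
      rw [← map_pow] at h2
      rwa [show (f.mapMatrix (A ^ k)).trace = f (A ^ k).trace from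
        (AddMonoidHom.map_trace f.toAddMonoidHom (A ^ k)).symm] at h2
  obtain ⟨l, hl, hlk⟩ := key M hM hMq
  obtain ⟨m, hm, hmk⟩ := key N hN hNq
  have hl1 : l ≠ 1 := by
    rintro rfl
    have h1 := hlk 1
    apply hMt
    apply f.injective
    simp only [pow_one, one_pow] at h1
    rw [map_ofNat]
    linear_combination -h1
  have : Fact q.Prime := ⟨hq⟩
  have : NeZero q := ⟨hq.ne_zero⟩
  have hprim : IsPrimitiveRoot l q := by
    rw [← orderOf_eq_prime hl hl1]
    exact IsPrimitiveRoot.orderOf l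
  obtain ⟨k, -, rfl⟩ := hprim.eq_pow_of_pow_eq_one hm
  refine ⟨k, f.injective ?_⟩
  have h1 := hlk k
  have h2 := hmk 1
  simp only [pow_one] at h2
  have h0 : l ^ k ≠ 0 := by
    intro h
    rw [h, zero_pow hq.ne_zero] at hm
    exact zero_ne_one hm
  apply mul_right_cancel₀ h0
  linear_combination h2 - h1

/-- A dihedral pair `(S, T)` of `2 × 2` matrices has a normal form that only depends on the trace
of `S`. -/
theorem Matrix.exists_dihedral_normal_form {F : Type*} [Field F]
    {S T : Matrix (Fin 2) (Fin 2) F} (hS : S.det = 1) (hT : T * T = 1) (hST : S * T * S = T)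
    (ha : S.trace ^ 2 ≠ 4) :
    ∃ P : GL (Fin 2) F, S * P = P * !![0, -1; 1, S.trace] ∧
      T * P = P * !![1, S.trace; 0, -1] := by
  have hCH : S * S = S.trace • S - 1 := by
    have h := hS
    rw [Matrix.det_fin_two] at h
    ext i j
    fin_cases i <;> fin_cases j <;> simp [Matrix.mul_apply, Matrix.trace_fin_two]
    · linear_combination -h
    · ring
    · ring
    · linear_combination -h
  have hT1 : T + 1 ≠ 0 := by
    intro h
    have hT' : T = -1 := eq_neg_of_add_eq_zero_left h
    rw [hT'] at hST
    have hSS : S * S = 1 := by simpa using hST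
    have h4 : S.trace • S = (2 : F) • (1 : Matrix (Fin 2) (Fin 2) F) := by
      rw [two_smul, ← sub_eq_iff_eq_add, ← hCH, hSS]
    have h5 := congrArg Matrix.det h4
    rw [Matrix.det_smul, Matrix.det_smul, hS] at h5
    simp at h5
    apply ha
    linear_combination h5
  obtain ⟨w, hw⟩ : ∃ w, (T + 1) *ᵥ w ≠ 0 := by
    by_contra! h
    exact hT1 (Matrix.ext_of_mulVec_single fun i => by rw [h, Matrix.zero_mulVec])
  set v := (T + 1) *ᵥ w with hv
  have hTv : T *ᵥ v = v := by
    rw [hv, Matrix.mulVec_mulVec, mul_add, hT, mul_one, add_comm]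
  have hSSv : S *ᵥ (S *ᵥ v) = S.trace • (S *ᵥ v) - v := by
    rw [Matrix.mulVec_mulVec, hCH, Matrix.sub_mulVec, Matrix.smul_mulVec, Matrix.one_mulVec]
  have hSTS : S * (T * S) = T := by rw [← mul_assoc, hST]
  have hTS : T * S = (S.trace • 1 - S) * T := by
    have h1 : (S.trace • 1 - S) * S = 1 := by
      rw [sub_mul, hCH, smul_mul_assoc, one_mul, sub_sub_cancel]
    calc T * S = ((S.trace • 1 - S) * S) * (T * S) := by rw [h1, one_mul]
      _ = _ := by rw [mul_assoc, hSTS]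
  have hTSv : T *ᵥ (S *ᵥ v) = S.trace • v - S *ᵥ v := by
    rw [Matrix.mulVec_mulVec, hTS, ← Matrix.mulVec_mulVec, hTv, Matrix.sub_mulVec,
      Matrix.smul_mulVec, Matrix.one_mulVec]
  set u := S *ᵥ v with hu
  have hdet : (!![v 0, u 0; v 1, u 1]).det ≠ 0 := by
    intro h
    obtain ⟨c, hc, hcv⟩ := Matrix.exists_mulVec_eq_zero_iff.2 h
    have hlin : c 0 • v + c 1 • u = 0 := by
      ext i
      have := congrFun hcv i
      fin_cases i <;> simpa [Matrix.mulVec, dotProduct, Fin.sum_univ_two, mul_comm] using this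
    have hc1 : c 1 ≠ 0 := by
      intro h1
      rw [h1, zero_smul, add_zero] at hlin
      have h0 := (smul_eq_zero.1 hlin).resolve_right hw
      exact hc (by ext i; fin_cases i <;> assumption)
    obtain ⟨l, hl⟩ : ∃ l : F, u = l • v := by
      refine ⟨-(c 0 / c 1), ?_⟩
      apply smul_right_injective _ hc1
      simp only [smul_smul]
      rw [mul_neg, mul_div_cancel₀ _ hc1, neg_smul]
      exact eq_neg_of_add_eq_zero_right hlin
    have h3 := Matrix.sq_sub_trace_mul_eigenvalue S hS l hw (hu ▸ hl)
    have h4 : (2 * l - S.trace) • v = 0 := by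
      rw [hl, Matrix.mulVec_smul, hTv] at hTSv
      rw [sub_smul, mul_smul, two_smul]
      rw [eq_sub_iff_add_eq] at hTSv
      rw [hTSv, sub_self]
    have h5 := (smul_eq_zero.1 h4).resolve_right hw
    apply ha
    linear_combination (2 * l - S.trace) * h5 - 4 * h3
  refine ⟨Matrix.GeneralLinearGroup.mkOfDetNeZero _ hdet, ?_, ?_⟩
  · have e0 : ∀ i, S i 0 * v 0 + S i 1 * v 1 = u i := fun i => by
      fin_cases i <;> simp [hu]
    have e1 : ∀ i, S i 0 * u 0 + S i 1 * u 1 = S.trace * u i - v i := fun i => by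
      simpa [Matrix.mulVec, dotProduct, Fin.sum_univ_two] using congrFun hSSv i
    ext i j
    fin_cases i <;> fin_cases j <;>
      simp [Matrix.GeneralLinearGroup.mkOfDetNeZero, Matrix.mul_apply, e0, e1] <;> ring
  · have e0 : ∀ i, T i 0 * v 0 + T i 1 * v 1 = v i := fun i => by
      simpa [Matrix.mulVec, dotProduct, Fin.sum_univ_two] using congrFun hTv i
    have e1 : ∀ i, T i 0 * u 0 + T i 1 * u 1 = S.trace * v i - u i := fun i => by
      simpa [Matrix.mulVec, dotProduct, Fin.sum_univ_two] using congrFun hTSv i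
    ext i j
    fin_cases i <;> fin_cases j <;>
      simp [Matrix.GeneralLinearGroup.mkOfDetNeZero, Matrix.mul_apply, e0, e1] <;> ring

/-- Dihedral pairs in `GL(2, F)` with rotations of equal trace are simultaneously conjugate. -/
theorem Matrix.GeneralLinearGroup.exists_conj_dihedral {F : Type*} [Field F]
    {s t s' t' : GL (Fin 2) F} (hs : s.val.det = 1) (ht : t * t = 1) (hst : s * t * s = t)
    (hs' : s'.val.det = 1) (ht' : t' * t' = 1) (hst' : s' * t' * s' = t')
    (ha : s.val.trace ^ 2 ≠ 4) (htr : s'.val.trace = s.val.trace) :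
    ∃ g : GL (Fin 2) F, g * s * g⁻¹ = s' ∧ g * t * g⁻¹ = t' := by
  obtain ⟨P, hP1, hP2⟩ := Matrix.exists_dihedral_normal_form (S := s.val) (T := t.val) hs
    (congrArg Units.val ht) (congrArg Units.val hst) ha
  obtain ⟨Q, hQ1, hQ2⟩ := Matrix.exists_dihedral_normal_form (S := s'.val) (T := t'.val) hs'
    (congrArg Units.val ht') (congrArg Units.val hst') (htr ▸ ha)
  rw [htr] at hQ1 hQ2
  have conj : ∀ (x y : GL (Fin 2) F) (A : Matrix (Fin 2) (Fin 2) F),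
      x.val * P.val = P.val * A → y.val * Q.val = Q.val * A →
      Q * P⁻¹ * x * (Q * P⁻¹)⁻¹ = y := by
    intro x y A hx hy
    have h : P⁻¹ * x * P = Q⁻¹ * y * Q := by
      apply Units.ext
      simp only [Units.val_mul]
      rw [mul_assoc, hx, mul_assoc, hy, Units.inv_mul_cancel_left, Units.inv_mul_cancel_left]
    calc Q * P⁻¹ * x * (Q * P⁻¹)⁻¹ = Q * (P⁻¹ * x * P) * Q⁻¹ := by group
      _ = y := by rw [h]; group
  exact ⟨Q * P⁻¹, conj _ _ _ hP1 hQ1, conj _ _ _ hP2 hQ2⟩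

/-- In characteristic `p`, an element of `SL(2)` with trace `±2` has order dividing `2p`. -/
theorem Matrix.pow_eq_one_of_trace_sq_eq_four {p : ℕ} [Fact p.Prime] (hpo : p ≠ 2)
    {S : Matrix (Fin 2) (Fin 2) (ZMod p)} (hS : S.det = 1) (ha : S.trace ^ 2 = 4) :
    S ^ (p * 2) = 1 := by
  have h2 : (2 : ZMod p) ≠ 0 := by
    exact Ring.two_ne_zero (by rwa [ZMod.ringChar_zmod_n])
  obtain ⟨e, he⟩ : ∃ e : ZMod p, S.trace = 2 * e := ⟨S.trace / 2, by field_simp⟩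
  have he2 : e ^ 2 = 1 := by
    apply mul_left_cancel₀ (mul_ne_zero h2 h2)
    rw [he] at ha
    linear_combination ha
  have hsq : (S - e • (1 : Matrix (Fin 2) (Fin 2) (ZMod p))) ^ 2 = 0 := by
    rw [Matrix.det_fin_two] at hS
    rw [Matrix.trace_fin_two] at he
    have hd : S 1 1 = 2 * e - S 0 0 := by linear_combination he
    rw [hd] at hS
    rw [pow_two]
    ext i j
    fin_cases i <;> fin_cases j <;> simp [Matrix.mul_apply, hd]
    · linear_combination -hS + he2
    · ring
    · ring
    · linear_combination -hS + he2
  have hp2 : (S - e • (1 : Matrix (Fin 2) (Fin 2) (ZMod p))) ^ p = 0 :=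
    pow_eq_zero_of_le (Fact.out : p.Prime).two_le hsq
  have hcomm : Commute S (e • (1 : Matrix (Fin 2) (Fin 2) (ZMod p))) :=
    (Commute.one_right S).smul_right e
  rw [sub_pow_char_of_commute _ hcomm, sub_eq_zero] at hp2
  rw [pow_mul, hp2, ← pow_mul, smul_pow, one_pow, mul_comm, pow_mul, he2, one_pow, one_smul]

/-- The properties of the images of the standard generators of a dihedral group of order `2q`
in `GL(2, 𝔽_p)`. -/
theorem dihedralGroup_generators_in_GL {p q : ℕ} [Fact p.Prime] (hq : q.Prime) (hqo : Odd q)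
    (hlt : q < p) (f : DihedralGroup q →* GL (Fin 2) (ZMod p)) (hf : Function.Injective f) :
    (f (.r 1)).val.det = 1 ∧ f (.r 1) ^ q = 1 ∧ (f (.r 1)).val.trace ^ 2 ≠ 4 ∧
      f (.sr 0) * f (.sr 0) = 1 ∧
      ∀ k : ℕ, f (.r 1) ^ k * f (.sr 0) * f (.r 1) ^ k = f (.sr 0) := by
  have hpow : f (.r 1) ^ q = 1 := by
    rw [← map_pow, DihedralGroup.r_one_pow_n, map_one]
  have hrel : ∀ k : ℕ, f (.r 1) ^ k * f (.sr 0) * f (.r 1) ^ k = f (.sr 0) := by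
    intro k
    rw [← map_pow, DihedralGroup.r_one_pow, ← map_mul, ← map_mul]
    simp
  have hsq : f (.sr 0) * f (.sr 0) = 1 := by
    rw [← map_mul, DihedralGroup.sr_mul_self, map_one]
  have hdet : (f (.r 1)).val.det = 1 := by
    have h1 : Matrix.GeneralLinearGroup.det (f (.r 1)) ^ 2 = 1 := by
      have h := congrArg Matrix.GeneralLinearGroup.det (hrel 1)
      simp only [pow_one, map_mul] at h
      rw [mul_right_comm, ← pow_two] at h
      exact mul_eq_right.1 h
    have h2 : Matrix.GeneralLinearGroup.det (f (.r 1)) ^ q = 1 := by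
      rw [← map_pow, hpow, map_one]
    have h3 : Matrix.GeneralLinearGroup.det (f (.r 1)) = 1 := by
      have := pow_gcd_eq_one.2 ⟨h1, h2⟩
      rwa [Nat.coprime_two_left.2 hqo, pow_one] at this
    exact congrArg Units.val h3
  refine ⟨hdet, hpow, fun ha => ?_, hsq, hrel⟩
  have hp : p.Prime := Fact.out
  have hq2 := hq.two_le
  have h1 : f (.r 1) ^ (p * 2) = 1 := by
    apply Units.ext
    rw [Units.val_pow_eq_pow_val]
    exact Matrix.pow_eq_one_of_trace_sq_eq_four (by omega) hdet ha
  have hcop : Nat.Coprime (p * 2) q :=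
    Nat.Coprime.mul_left ((Nat.coprime_primes hp hq).2 hlt.ne') (Nat.coprime_two_left.2 hqo)
  have h3 : f (.r 1) = 1 := by
    have := pow_gcd_eq_one.2 ⟨h1, hpow⟩
    rwa [hcop, pow_one] at this
  have h4 : orderOf (DihedralGroup.r (1 : ZMod q)) = 1 := by
    rw [orderOf_eq_one_iff]
    exact hf (by rw [h3, map_one])
  rw [DihedralGroup.orderOf_r_one] at h4
  omega

/-- Any two faithful images of the dihedral group of order `2q` in `GL(2, 𝔽_p)` are conjugate. -/
theorem dihedralGroup_ranges_conj {p q : ℕ} [Fact p.Prime] (hq : q.Prime) (hqo : Odd q)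
    (hlt : q < p) (f f' : DihedralGroup q →* GL (Fin 2) (ZMod p)) (hf : Function.Injective f)
    (hf' : Function.Injective f') :
    ∃ g : GL (Fin 2) (ZMod p), f.range.map (MulAut.conj g).toMonoidHom = f'.range := by
  have : NeZero q := ⟨hq.ne_zero⟩
  obtain ⟨hd, hp, ha, ht, hr⟩ := dihedralGroup_generators_in_GL hq hqo hlt f hf
  obtain ⟨hd', hp', ha', ht', hr'⟩ := dihedralGroup_generators_in_GL hq hqo hlt f' hf'
  obtain ⟨k, hk⟩ := Matrix.exists_trace_pow_eq hq hd' hd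
    (by rw [← Units.val_pow_eq_pow_val, hp', Units.val_one])
    (by rw [← Units.val_pow_eq_pow_val, hp, Units.val_one])
    (fun h => ha' (by rw [h]; norm_num))
  obtain ⟨g, hg1, hg2⟩ := Matrix.GeneralLinearGroup.exists_conj_dihedral hd ht
    (by simpa using hr 1) (s' := f' (.r 1) ^ k)
    (by rw [Units.val_pow_eq_pow_val, Matrix.det_pow, hd', one_pow]) ht' (hr' k) ha
    (by rw [Units.val_pow_eq_pow_val, hk])
  refine ⟨g, Subgroup.eq_of_le_of_card_ge ?_ ?_⟩
  · have hrot : ∀ i : ZMod q, MulAut.conj g (f (.r i)) ∈ f'.range := by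
      intro i
      have hi : (DihedralGroup.r i : DihedralGroup q) = .r 1 ^ i.val := by
        rw [DihedralGroup.r_one_pow, ZMod.natCast_zmod_val]
      rw [hi, map_pow, map_pow, MulAut.conj_apply, hg1]
      exact pow_mem (pow_mem (MonoidHom.mem_range.2 ⟨_, rfl⟩) _) _
    rintro _ ⟨_, ⟨x, rfl⟩, rfl⟩
    change MulAut.conj g (f x) ∈ f'.range
    rcases x with i | i
    · exact hrot i
    · have hi : (DihedralGroup.sr i : DihedralGroup q) = .sr 0 * .r i := by simp
      rw [hi, map_mul, map_mul, MulAut.conj_apply g (f (.sr 0)), hg2]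
      exact mul_mem ⟨_, rfl⟩ (hrot i)
  · rw [Subgroup.card_map_of_injective (MulAut.conj g).injective,
      ← Nat.card_congr (MonoidHom.ofInjective hf).toEquiv,
      ← Nat.card_congr (MonoidHom.ofInjective hf').toEquiv]


/-- Let `p > q` be odd primes. If `q ∤ p² - 1`, then `GL(2, 𝔽_p)` has no
subgroup isomorphic to the dihedral group `D_{2q}` of order `2q`; and if
`q ∣ p² - 1`, then any two subgroups of `GL(2, 𝔽_p)` isomorphic to `D_{2q}`
are conjugate in `GL(2, 𝔽_p)`. -/
theorem stmt10 {p q : ℕ} (hp : p.Prime) (hq : q.Prime) (hpo : Odd p)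
    (hqo : Odd q) (hlt : q < p) :
    (¬ q ∣ p ^ 2 - 1 →
      ∀ H : Subgroup (GL (Fin 2) (ZMod p)),
        ¬ Nonempty (↥H ≃* DihedralGroup q)) ∧
    (q ∣ p ^ 2 - 1 →
      ∀ H K : Subgroup (GL (Fin 2) (ZMod p)),
        Nonempty (↥H ≃* DihedralGroup q) → Nonempty (↥K ≃* DihedralGroup q) →
        ∃ g : GL (Fin 2) (ZMod p),
          Subgroup.map (MulAut.conj g).toMonoidHom H = K) := by
  have : Fact p.Prime := ⟨hp⟩
  refine ⟨fun hdvd H ⟨e⟩ => hdvd ?_, fun _ H K ⟨e⟩ ⟨e'⟩ => ?_⟩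
  · have h1 : q ∣ Nat.card (GL (Fin 2) (ZMod p)) := by
      refine dvd_trans ?_ (Subgroup.card_subgroup_dvd_card H)
      rw [Nat.card_congr e.toEquiv, DihedralGroup.nat_card]
      exact dvd_mul_left q 2
    rw [Matrix.card_GL_field] at h1
    simp only [Fin.prod_univ_two, Fin.val_zero, Fin.val_one, pow_zero, pow_one,
      ZMod.card] at h1
    have h2 : p ^ 2 - p = p * (p - 1) := by rw [Nat.mul_sub, mul_one, pow_two]
    have h3 : p - 1 ∣ p ^ 2 - 1 := by simpa using Nat.sub_dvd_pow_sub_pow p 1 2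
    rw [h2] at h1
    rcases (Nat.Prime.dvd_mul hq).1 h1 with h | h
    · exact h
    rcases (Nat.Prime.dvd_mul hq).1 h with h | h
    · exact absurd ((Nat.prime_dvd_prime_iff_eq hq hp).1 h) hlt.ne
    · exact h.trans h3
  · have hrange : ∀ (L : Subgroup (GL (Fin 2) (ZMod p))) (φ : L ≃* DihedralGroup q),
        (L.subtype.comp φ.symm.toMonoidHom).range = L := by
      intro L φ
      rw [MonoidHom.range_comp, MonoidHom.range_eq_top.2 φ.symm.surjective,
        ← MonoidHom.range_eq_map, Subgroup.range_subtype]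
    obtain ⟨g, hg⟩ := dihedralGroup_ranges_conj hq hqo hlt
      (H.subtype.comp e.symm.toMonoidHom) (K.subtype.comp e'.symm.toMonoidHom)
      (H.subtype_injective.comp e.symm.injective) (K.subtype_injective.comp e'.symm.injective)
    rw [hrange, hrange] at hg
    exact ⟨g, hg⟩
end

section
/- Let p > q be odd primes and let G = NH be a group such that N ≅ Z_p × Z_p is normal in G, H ≅ D_{2q} is a subgroup of G, and C_G(N) = N. Then q divides p^2 - 1, and any two such groups G are isomorphic. -/
/-- The hypothesis of the proposition: `G = NH` with `N ≅ ℤ_p × ℤ_p` normal,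
`H ≅ D_{2q}` a subgroup, and `C_G(N) = N`. -/
def NHConfig (p q : ℕ) (G : Type*) [Group G] (N H : Subgroup G) : Prop :=
  N.Normal ∧
  (∀ g : G, ∃ n ∈ N, ∃ h ∈ H, g = n * h) ∧
  Nonempty (↥N ≃* Multiplicative (ZMod p × ZMod p)) ∧
  Nonempty (↥H ≃* DihedralGroup q) ∧
  Subgroup.centralizer (N : Set G) = N

theorem pow_eq_one_add_nsmul_sub_one {A : Type*} [Ring A] {X : A} (h : (X - 1) * (X - 1) = 0)
    (n : ℕ) : X ^ n = 1 + n • (X - 1) := by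
  induction n with
  | zero => simp
  | succ n ih =>
    have h1 : X * (X - 1) = X - 1 := by
      rw [sub_mul, one_mul, sub_eq_zero] at h
      exact h
    rw [pow_succ', ih, mul_add, mul_one, mul_smul_comm, h1, succ_nsmul]
    abel

theorem eq_one_of_pow_eq_one_of_sub_one_sq {F A : Type*} [Field F] [Ring A] [Algebra F A] {n : ℕ}
    (hn : (n : F) ≠ 0) {X : A} (hX : X ^ n = 1) (h : (X - 1) * (X - 1) = 0) : X = 1 := by
  rw [pow_eq_one_add_nsmul_sub_one h, add_eq_left, ← Nat.cast_smul_eq_nsmul F] at hX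
  exact sub_eq_zero.1 ((smul_eq_zero_iff_right hn).1 hX)

theorem eq_one_of_sq_eq_one_of_odd {M : Type*} [Monoid M] {n : ℕ} (hn : Odd n) {X : M}
    (hX : X ^ n = 1) (h : X * X = 1) : X = 1 := by
  obtain ⟨m, rfl⟩ := hn
  rwa [pow_succ, pow_mul, pow_two, h, one_pow, one_mul] at hX

theorem pow_add_two_add_pow_add_two_of_mul_eq_one {B : Type*} [Ring B] {x y : B} (hxy : x * y = 1)
    (hyx : y * x = 1) (n : ℕ) :
    x ^ (n + 2) + y ^ (n + 2) = (x + y) * (x ^ (n + 1) + y ^ (n + 1)) - (x ^ n + y ^ n) := by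
  have e1 : x * y ^ (n + 1) = y ^ n := by rw [pow_succ', ← mul_assoc, hxy, one_mul]
  have e2 : y * x ^ (n + 1) = x ^ n := by rw [pow_succ', ← mul_assoc, hyx, one_mul]
  rw [add_mul, mul_add, mul_add, e1, e2, ← pow_succ', ← pow_succ']
  abel

theorem exists_algebraMap_eq_pow_add_pow {F A K : Type*} [Field F] [Ring A] [Algebra F A]
    [Ring K] [Algebra F K] {t : F} {a a' : A} {z z' : K}
    (h1 : a * a' = 1) (h2 : a' * a = 1) (ha : a + a' = algebraMap F A t)
    (h3 : z * z' = 1) (h4 : z' * z = 1) (hz : z + z' = algebraMap F K t) (n : ℕ) :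
    ∃ d : F, a ^ n + a' ^ n = algebraMap F A d ∧ z ^ n + z' ^ n = algebraMap F K d := by
  induction n using Nat.twoStepInduction with
  | zero => exact ⟨2, by rw [pow_zero, pow_zero, one_add_one_eq_two, map_ofNat],
    by rw [pow_zero, pow_zero, one_add_one_eq_two, map_ofNat]⟩
  | one => exact ⟨t, by simpa using ha, by simpa using hz⟩
  | more n ih1 ih2 =>
    obtain ⟨d, hd, hd'⟩ := ih1
    obtain ⟨e, he, he'⟩ := ih2
    exact ⟨t * e - d, by rw [pow_add_two_add_pow_add_two_of_mul_eq_one h1 h2, ha, hd, he, map_sub, map_mul],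
      by rw [pow_add_two_add_pow_add_two_of_mul_eq_one h3 h4, hz, hd', he', map_sub, map_mul]⟩

theorem exists_root_of_unity_of_add_eq_algebraMap {F A K : Type*} [Field F] [Ring A] [Algebra F A]
    [Nontrivial A] [Field K] [Algebra F K] [IsAlgClosed K] {q : ℕ} (hq : (q : F) ≠ 0)
    (h2 : (2 : F) ≠ 0)
    {t : F} {a a' : A} (h : a * a' = 1) (h' : a' * a = 1) (ha : a + a' = algebraMap F A t)
    (haq : a ^ q = 1) (hne : a ≠ 1) :
    ∃ z : K, z ≠ 0 ∧ z ^ q = 1 ∧ z ≠ 1 ∧ z + z⁻¹ = algebraMap F K t := by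
  have h2K : (2 : K) ≠ 0 := by
    rw [← map_ofNat (algebraMap F K) 2]
    exact (map_ne_zero (algebraMap F K)).2 h2
  have : NeZero (2 : K) := ⟨h2K⟩
  obtain ⟨z, hz⟩ := exists_quadratic_eq_zero (a := (1 : K)) (b := -algebraMap F K t) (c := 1)
    one_ne_zero (by
      obtain ⟨w, hw⟩ := IsAlgClosed.exists_pow_nat_eq (discrim (1 : K) (-algebraMap F K t) 1)
        two_pos
      exact ⟨w, by rw [← hw, pow_two]⟩)
  have z0 : z ≠ 0 := by
    rintro rfl
    simp at hz
  have hzt : z + z⁻¹ = algebraMap F K t := by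
    field_simp
    linear_combination hz
  refine ⟨z, z0, ?_, ?_, hzt⟩
  · obtain ⟨d, hd, hd'⟩ := exists_algebraMap_eq_pow_add_pow h h' ha (mul_inv_cancel₀ z0)
      (inv_mul_cancel₀ z0) hzt q
    have haq' : a' ^ q = 1 := by
      have hc : Commute a a' := h.trans h'.symm
      have := hc.mul_pow q
      rwa [h, haq, one_pow, one_mul, eq_comm] at this
    have hd2 : d = 2 := by
      apply (algebraMap F A).injective
      rw [← hd, haq, haq', one_add_one_eq_two, map_ofNat]
    rw [hd2, map_ofNat, inv_pow] at hd'
    have zq : z ^ q ≠ 0 := pow_ne_zero _ z0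
    field_simp at hd'
    have : (z ^ q - 1) ^ 2 = 0 := by linear_combination hd'
    exact sub_eq_zero.1 (pow_eq_zero_iff two_ne_zero |>.1 this)
  · rintro rfl
    apply hne
    have ht : t = 2 := by
      apply (algebraMap F K).injective
      rw [← hzt, inv_one, one_add_one_eq_two, map_ofNat]
    refine eq_one_of_pow_eq_one_of_sub_one_sq hq haq ?_
    rw [ht, map_ofNat] at ha
    have e : a' = 2 - a := eq_sub_of_add_eq' ha
    rw [e] at h
    have : a * a = 2 * a - 1 := by rw [← h]; noncomm_ring
    rw [sub_mul, one_mul, mul_sub, mul_one, this]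
    noncomm_ring

theorem dvd_sq_sub_one_of_add_inv_eq_algebraMap {p q : ℕ} [Fact p.Prime] {K : Type*} [Field K]
    [Algebra (ZMod p) K] {t : ZMod p} {z : K} (z0 : z ≠ 0) (hz : orderOf z = q)
    (hzt : z + z⁻¹ = algebraMap (ZMod p) K t) : q ∣ p ^ 2 - 1 := by
  have : CharP K p := charP_of_injective_algebraMap (algebraMap (ZMod p) K).injective p
  have h : z ^ p + (z ^ p)⁻¹ = z + z⁻¹ := by
    rw [← inv_pow, ← add_pow_char, hzt, ← map_pow, ZMod.pow_card]
  have zp : z ^ p ≠ 0 := pow_ne_zero _ z0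
  have h' : (z ^ p - z) * (z ^ p * z - 1) = 0 := by
    field_simp at h
    linear_combination h
  rw [← hz, orderOf_dvd_iff_pow_eq_one]
  have hp := (Fact.out : p.Prime).one_le
  have hf : p ^ 2 - 1 = (p + 1) * (p - 1) := by simpa using Nat.sq_sub_sq p 1
  rcases mul_eq_zero.1 h' with h | h
  · have : z ^ (p - 1) = 1 := by
      apply mul_right_cancel₀ z0
      rw [← pow_succ, Nat.sub_add_cancel hp, one_mul, sub_eq_zero.1 h]
    rw [hf, mul_comm, pow_mul, this, one_pow]
  · rw [hf, pow_mul, pow_succ, sub_eq_zero.1 h, one_pow]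

theorem exists_linearIndependent_of_dihedral_relations {F V : Type*} [Field F] [AddCommGroup V]
    [Module F V] (hV : Module.finrank F V = 2) (h2 : (2 : F) ≠ 0) {q : ℕ} (hq : (q : F) ≠ 0)
    (hqo : Odd q) {R R' S : Module.End F V} (hRR' : R * R' = 1) (hR'R : R' * R = 1)
    (hSS : S * S = 1) (hSR : S * R = R' * S) (hRq : R ^ q = 1) (hR : R ≠ 1) :
    ∃ t : F, R + R' = algebraMap F (Module.End F V) t ∧
      ∃ v : V, S v = v ∧ LinearIndependent F ![v, R v] := by
  have hSR' : S * R' = R * S := by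
    calc S * R' = S * (R' * S) * S := by rw [mul_assoc, mul_assoc, hSS, mul_one]
      _ = R * S := by rw [← hSR, ← mul_assoc, hSS, one_mul]
  have sr (x : V) : S (R x) = R' (S x) := LinearMap.congr_fun hSR x
  have sr' (x : V) : S (R' x) = R (S x) := LinearMap.congr_fun hSR' x
  have ss (x : V) : S (S x) = x := LinearMap.congr_fun hSS x
  have rr' (x : V) : R (R' x) = x := LinearMap.congr_fun hRR' x
  have r'r (x : V) : R' (R x) = x := LinearMap.congr_fun hR'R x
  have hne : R ≠ R' := fun h => hR (eq_one_of_sq_eq_one_of_odd hqo hRq (by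
    nth_rw 2 [h]
    exact hRR'))
  obtain ⟨v, v0, hv⟩ : ∃ v : V, v ≠ 0 ∧ S v = v := by
    by_contra! hc
    refine hne (LinearMap.ext fun x => ?_)
    have key (y : V) : S y = -y := by
      by_contra hy
      exact hc (S y + y) (fun h => hy (eq_neg_of_add_eq_zero_left h)) (by
        rw [map_add, ss, add_comm])
    have := sr x
    rw [key, key, map_neg] at this
    exact neg_injective this
  obtain ⟨w, w0, hw⟩ : ∃ w : V, w ≠ 0 ∧ S w = -w := by
    by_contra! hc
    refine hne (LinearMap.ext fun x => ?_)
    have key (y : V) : S y = y := by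
      by_contra hy
      exact hc (S y - y) (sub_ne_zero.2 hy) (by rw [map_sub, ss, neg_sub])
    have := sr x
    rwa [key, key] at this
  have hli : LinearIndependent F ![v, w] := by
    rw [LinearIndependent.pair_iff]
    intro a b hab
    have hS := congrArg S hab
    rw [map_add, map_smul, map_smul, hv, hw, map_zero] at hS
    have ha : (2 * a) • v = 0 := by
      linear_combination (norm := module) hab + hS
    have hb : (2 * b) • w = 0 := by
      linear_combination (norm := module) hab - hS
    simpa [v0, w0, h2] using And.intro ha hb
  have span_pair {x y : V} (h : LinearIndependent F ![x, y]) (z : V) :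
      ∃ a b : F, a • x + b • y = z := by
    have : FiniteDimensional F V := .of_finrank_pos (by simp [hV])
    have := h.span_eq_top_of_card_eq_finrank' (by simp [hV])
    rw [Matrix.range_cons_cons_empty] at this
    exact Submodule.mem_span_pair.1 (this ▸ Submodule.mem_top)
  have fixed {x : V} (hx : S x = x) : ∃ a : F, x = a • v := by
    obtain ⟨a, b, rfl⟩ := span_pair hli x
    rw [map_add, map_smul, map_smul, hv, hw] at hx
    have hb : (2 * b) • w = 0 := by
      linear_combination (norm := module) -hx
    have hb : b = 0 := by simpa [w0, h2] using hb
    exact ⟨a, by simp [hb]⟩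
  obtain ⟨t, ht⟩ : ∃ t : F, R v + R' v = t • v := fixed (by
    rw [map_add, sr, sr', hv, add_comm])
  have hvR : LinearIndependent F ![v, R v] := by
    rw [LinearIndependent.pair_iff' v0]
    intro c hc
    have hdv : R v - R' v = 0 := by
      have := congrArg S hc
      rw [map_smul, sr, hv, hc] at this
      rw [this, sub_self]
    obtain ⟨a, ha⟩ : ∃ a : F, R w - R' w = a • v := fixed (by
      rw [map_sub, sr, sr', hw, map_neg, map_neg]
      abel)
    have hsq : (R - R') * (R - R') = 0 := by
      ext x
      obtain ⟨a', b', rfl⟩ := span_pair hli x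
      have hdv' : (R - R') v = 0 := hdv
      have ha' : (R - R') w = a • v := ha
      simp only [Module.End.mul_apply, map_add, map_smul, hdv', ha', map_zero,
        smul_zero, add_zero, LinearMap.zero_apply]
    apply hR
    refine eq_one_of_sq_eq_one_of_odd hqo hRq ?_
    have hcomm : Commute R R' := hRR'.trans hR'R.symm
    refine eq_one_of_pow_eq_one_of_sub_one_sq hq (by rw [← pow_two, ← pow_mul, mul_comm,
      pow_mul, hRq, one_pow]) ?_
    have e : R * R - 1 = R * (R - R') := by rw [mul_sub, hRR']
    have hc : Commute (R - R') R := (Commute.refl R).sub_left hcomm.symm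
    rw [e, mul_assoc, ← mul_assoc (R - R'), hc.eq, mul_assoc, hsq, mul_zero, mul_zero]
  refine ⟨t, LinearMap.ext fun x => ?_, v, hv, hvR⟩
  obtain ⟨a, b, rfl⟩ := span_pair hvR x
  have h3 : R (R v) + R' (R v) = t • R v := by
    rw [r'r, ← map_smul, ← ht, map_add, rr']
  simp only [LinearMap.add_apply, Module.algebraMap_end_apply, map_add, map_smul]
  linear_combination (norm := module) a • ht + b • h3

theorem exists_linearEquiv_of_dihedral_relations {F V V' : Type*} [Field F] [AddCommGroup V]
    [Module F V] [AddCommGroup V'] [Module F V'] (hV : Module.finrank F V = 2)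
    (hV' : Module.finrank F V' = 2) {t : F}
    {R R' S : Module.End F V} {Q Q' T : Module.End F V'}
    (hRR' : R * R' = 1) (hSR : S * R = R' * S) (hR : R + R' = algebraMap F _ t)
    (hQQ' : Q * Q' = 1) (hTQ : T * Q = Q' * T) (hQ : Q + Q' = algebraMap F _ t)
    {v : V} (hv : S v = v) (hvR : LinearIndependent F ![v, R v])
    {w : V'} (hw : T w = w) (hwQ : LinearIndependent F ![w, Q w]) :
    ∃ L : V ≃ₗ[F] V', (∀ x, L (R x) = Q (L x)) ∧ ∀ x, L (S x) = T (L x) := by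
  let b := basisOfLinearIndependentOfCardEqFinrank hvR (by simp [hV])
  let c := basisOfLinearIndependentOfCardEqFinrank hwQ (by simp [hV'])
  have b0 : b 0 = v := by simp [b]
  have b1 : b 1 = R v := by simp [b]
  have c0 : c 0 = w := by simp [c]
  have c1 : c 1 = Q w := by simp [c]
  let L := b.equiv c (Equiv.refl _)
  have L0 : L v = w := by rw [← b0, Module.Basis.equiv_apply, Equiv.refl_apply, c0]
  have L1 : L (R v) = Q w := by rw [← b1, Module.Basis.equiv_apply, Equiv.refl_apply, c1]
  have hR' (x : V) : R' x = t • x - R x := by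
    rw [eq_sub_iff_add_eq']
    exact LinearMap.congr_fun hR x
  have hQ' (x : V') : Q' x = t • x - Q x := by
    rw [eq_sub_iff_add_eq']
    exact LinearMap.congr_fun hQ x
  have hRR (x : V) : R (R x) = t • R x - x := by
    have : R (R' x) = x := LinearMap.congr_fun hRR' x
    rw [hR', map_sub, map_smul] at this
    rw [eq_sub_iff_add_eq, ← eq_sub_iff_add_eq', this]
  have hQQ (x : V') : Q (Q x) = t • Q x - x := by
    have : Q (Q' x) = x := LinearMap.congr_fun hQQ' x
    rw [hQ', map_sub, map_smul] at this
    rw [eq_sub_iff_add_eq, ← eq_sub_iff_add_eq', this]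
  have sr : S (R v) = t • v - R v := by
    rw [← hR']
    nth_rw 2 [← hv]
    exact LinearMap.congr_fun hSR v
  have tq : T (Q w) = t • w - Q w := by
    rw [← hQ']
    nth_rw 2 [← hw]
    exact LinearMap.congr_fun hTQ w
  refine ⟨L, fun x => ?_, fun x => ?_⟩
  · refine LinearMap.congr_fun (f := L.toLinearMap ∘ₗ R) (g := Q ∘ₗ L.toLinearMap)
      (b.ext fun i => ?_) x
    fin_cases i
    · simp [b0, L0, L1]
    · simp [b1, L0, L1, hRR, hQQ]
  · refine LinearMap.congr_fun (f := L.toLinearMap ∘ₗ S) (g := T ∘ₗ L.toLinearMap)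
      (b.ext fun i => ?_) x
    fin_cases i
    · simp [b0, L0, hv, hw]
    · simp [b1, L0, L1, sr, tq]

/-- The automorphism of the dihedral group multiplying the rotation parameter by a unit. -/
def DihedralGroup.scale {n : ℕ} (k : (ZMod n)ˣ) : DihedralGroup n ≃* DihedralGroup n where
  toFun
    | .r i => .r (k * i)
    | .sr i => .sr (k * i)
  invFun
    | .r i => .r (↑k⁻¹ * i)
    | .sr i => .sr (↑k⁻¹ * i)
  left_inv := by rintro (i | i) <;> simp
  right_inv := by rintro (i | i) <;> simp
  map_mul' := by rintro (i | i) (j | j) <;> simp [mul_add, mul_sub]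

theorem DihedralGroup.eq_of_map_r_one_of_map_sr_zero {n : ℕ} [NeZero n] {M : Type*} [Monoid M]
    {f g : DihedralGroup n →* M} (hr : f (r 1) = g (r 1)) (hs : f (sr 0) = g (sr 0)) : f = g := by
  have h (i : ZMod n) : f (r i) = g (r i) := by
    rw [← ZMod.natCast_zmod_val i, ← r_one_pow, map_pow, map_pow, hr]
  ext (i | i)
  · exact h i
  · rw [← zero_add i, ← sr_mul_r, map_mul, map_mul, h, hs]

theorem DihedralGroup.relations_of_injective {n : ℕ} (hn : n ≠ 1) {M : Type*} [Monoid M]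
    {σ : DihedralGroup n →* M} (hσ : Function.Injective σ) :
    σ (r 1) * σ (r (-1)) = 1 ∧ σ (r (-1)) * σ (r 1) = 1 ∧ σ (sr 0) * σ (sr 0) = 1 ∧
      σ (sr 0) * σ (r 1) = σ (r (-1)) * σ (sr 0) ∧ σ (r 1) ^ n = 1 ∧ σ (r 1) ≠ 1 := by
  refine ⟨?_, ?_, ?_, ?_, ?_, fun h => hn ?_⟩
  · rw [← map_mul, r_mul_r, add_neg_cancel, r_zero, map_one]
  · rw [← map_mul, r_mul_r, neg_add_cancel, r_zero, map_one]
  · rw [← map_mul, sr_mul_self, map_one]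
  · simp [← map_mul]
  · rw [← map_pow, r_one_pow_n, map_one]
  · rw [← orderOf_r_one (n := n), orderOf_eq_one_iff]
    exact hσ (h.trans σ.map_one.symm)

theorem DihedralGroup.exists_mulEquiv_linearEquiv {p q : ℕ} [Fact p.Prime] (hq : q.Prime)
    (hqo : Odd q) (hlt : q < p) {V V' : Type*} [AddCommGroup V]
    [Module (ZMod p) V] [AddCommGroup V'] [Module (ZMod p) V']
    (hV : Module.finrank (ZMod p) V = 2) (hV' : Module.finrank (ZMod p) V' = 2)
    (ρ : DihedralGroup q →* Module.End (ZMod p) V) (hρ : Function.Injective ρ)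
    (ρ' : DihedralGroup q →* Module.End (ZMod p) V') (hρ' : Function.Injective ρ') :
    q ∣ p ^ 2 - 1 ∧ ∃ (α : DihedralGroup q ≃* DihedralGroup q) (L : V ≃ₗ[ZMod p] V'),
      ∀ d x, L (ρ d x) = ρ' (α d) (L x) := by
  have hq0 : (q : ZMod p) ≠ 0 := by
    rw [Ne, ZMod.natCast_eq_zero_iff]
    exact Nat.not_dvd_of_pos_of_lt hq.pos hlt
  have h2 : (2 : ZMod p) ≠ 0 := by
    have : ((2 : ℕ) : ZMod p) ≠ 0 := by
      rw [Ne, ZMod.natCast_eq_zero_iff]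
      exact Nat.not_dvd_of_pos_of_lt two_pos (hq.two_le.trans_lt hlt)
    exact_mod_cast this
  have : Fact q.Prime := ⟨hq⟩
  have : Fact q.Prime := ⟨hq⟩
  obtain ⟨a1, a2, a3, a4, a5, a6⟩ := relations_of_injective hq.ne_one hρ
  obtain ⟨b1, b2, b3, b4, b5, b6⟩ := relations_of_injective hq.ne_one hρ'
  obtain ⟨t, ht, v, hv, hvR⟩ :=
    exists_linearIndependent_of_dihedral_relations hV h2 hq0 hqo a1 a2 a3 a4 a5 a6
  obtain ⟨t', ht', -⟩ :=
    exists_linearIndependent_of_dihedral_relations hV' h2 hq0 hqo b1 b2 b3 b4 b5 b6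
  have : Nontrivial V := Module.nontrivial_of_finrank_pos (R := ZMod p) (by simp [hV])
  have : Nontrivial V' := Module.nontrivial_of_finrank_pos (R := ZMod p) (by simp [hV'])
  obtain ⟨z, z0, hzq, z1, hzt⟩ := exists_root_of_unity_of_add_eq_algebraMap
    (K := AlgebraicClosure (ZMod p)) hq0 h2 a1 a2 ht a5 a6
  obtain ⟨y, y0, hyq, y1, hyt⟩ := exists_root_of_unity_of_add_eq_algebraMap
    (K := AlgebraicClosure (ZMod p)) hq0 h2 b1 b2 ht' b5 b6
  refine ⟨dvd_sq_sub_one_of_add_inv_eq_algebraMap z0 (orderOf_eq_prime hzq z1) hzt, ?_⟩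
  have hy : IsPrimitiveRoot y q := by
    rw [← orderOf_eq_prime hyq y1]
    exact IsPrimitiveRoot.orderOf y
  obtain ⟨k, hkq, hk⟩ := hy.eq_pow_of_pow_eq_one hzq
  have k0 : k ≠ 0 := by
    rintro rfl
    exact z1 (by rw [← hk, pow_zero])
  let u := ZMod.unitOfCoprime k ((Nat.coprime_of_lt_prime k0 hkq hq).symm)
  let σ : DihedralGroup q →* Module.End (ZMod p) V' := ρ'.comp (scale u).toMonoidHom
  have hσ : Function.Injective σ := hρ'.comp (scale u).injective
  obtain ⟨c1, c2, c3, c4, c5, c6⟩ := relations_of_injective hq.ne_one hσ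
  obtain ⟨s, hs, w, hw, hwR⟩ :=
    exists_linearIndependent_of_dihedral_relations hV' h2 hq0 hqo c1 c2 c3 c4 c5 c6
  have hst : s = t := by
    obtain ⟨d, hd, hd'⟩ := exists_algebraMap_eq_pow_add_pow b1 b2 ht' (mul_inv_cancel₀ y0)
      (inv_mul_cancel₀ y0) hyt k
    trans d
    · apply (algebraMap (ZMod p) (Module.End (ZMod p) V')).injective
      rw [← hs, ← hd, ← map_pow, ← map_pow, r_pow, r_pow]
      simp [σ, scale, u]
    · apply (algebraMap (ZMod p) (AlgebraicClosure (ZMod p))).injective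
      rw [← hd', inv_pow, hk, hzt]
  rw [hst] at hs
  obtain ⟨L, hLr, hLs⟩ :=
    exists_linearEquiv_of_dihedral_relations hV hV' a1 a4 ht c1 c4 hs hv hvR hw hwR
  refine ⟨scale u, L, fun d x => ?_⟩
  have key : (L.conjRingEquiv : _ →* Module.End (ZMod p) V').comp ρ = σ := by
    apply eq_of_map_r_one_of_map_sr_zero <;> ext x
    · simp [hLr]
    · simp [hLs]
  have := LinearMap.congr_fun (DFunLike.congr_fun key d) (L x)
  simpa [σ] using this

theorem exists_injective_linear_action {p : ℕ} {V D : Type*} [AddCommGroup V] [Module (ZMod p) V]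
    [Group D] (φ : D →* MulAut (Multiplicative V)) (hφ : Function.Injective φ) :
    ∃ ρ : D →* Module.End (ZMod p) V, Function.Injective ρ ∧
      ∀ d x, ρ d x = (φ d (.ofAdd x)).toAdd := by
  let ρ : D →* Module.End (ZMod p) V :=
    { toFun := fun d => AddMonoidHom.toZModLinearMap p (MonoidHom.toAdditive (φ d).toMonoidHom)
      map_one' := by
        ext x
        change (φ 1 (.ofAdd x)).toAdd = x
        rw [map_one]
        rfl
      map_mul' := fun a b => by
        ext x
        change (φ (a * b) (.ofAdd x)).toAdd = (φ a (φ b (.ofAdd x))).toAdd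
        rw [map_mul]
        rfl }
  have h (d : D) (x : V) : ρ d x = (φ d (.ofAdd x)).toAdd := rfl
  refine ⟨ρ, fun a b hab => hφ (MulEquiv.ext fun x => ?_), h⟩
  exact congrArg Multiplicative.ofAdd (LinearMap.congr_fun hab x.toAdd)

theorem Subgroup.eq_one_of_forall_conj_eq {G : Type*} [Group G] {N H : Subgroup G}
    (hc : centralizer (N : Set G) = N) (hd : Disjoint N H) {h : G} (hh : h ∈ H)
    (hconj : ∀ n ∈ N, h * n * h⁻¹ = n) : h = 1 := by
  refine disjoint_def.1 hd ?_ hh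
  rw [← hc, mem_centralizer_iff]
  intro n hn
  exact (mul_inv_eq_iff_eq_mul.1 (hconj n hn)).symm

/-- A group as in `NHConfig` is a semidirect product by a faithful linear action. -/
theorem NHConfig.exists_mulEquiv {p q : ℕ} (hp : p.Prime) (hq : q.Prime) (hpo : Odd p)
    (hlt : q < p) {G : Type*} [Group G] {N H : Subgroup G} (h : NHConfig p q G N H) :
    ∃ φ : DihedralGroup q →* MulAut (Multiplicative (ZMod p × ZMod p)),
      Function.Injective φ ∧
        Nonempty (G ≃* Multiplicative (ZMod p × ZMod p) ⋊[φ] DihedralGroup q) := by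
  obtain ⟨hN, hNH, ⟨e⟩, ⟨f⟩, hc⟩ := h
  have hd : Disjoint N H := by
    apply Subgroup.disjoint_of_coprime_natCard
    rw [Nat.card_congr e.toEquiv, Nat.card_congr f.toEquiv, DihedralGroup.nat_card]
    have : Nat.card (Multiplicative (ZMod p × ZMod p)) = p * p := by
      rw [Nat.card_congr Multiplicative.toAdd, Nat.card_prod, Nat.card_zmod]
    rw [this]
    have : p.Coprime (2 * q) := by
      refine Nat.Coprime.mul_right ?_ ((Nat.coprime_primes hp hq).2 hlt.ne')
      exact hpo.coprime_two_right
    exact this.mul_left this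
  have hcomp : N.IsComplement' H := by
    refine Subgroup.isComplement'_of_disjoint_and_mul_eq_univ hd (Set.eq_univ_of_forall ?_)
    intro g
    obtain ⟨n, hn, x, hx, rfl⟩ := hNH g
    exact Set.mul_mem_mul hn hx
  let ψ := N.normalizerMonoidHom.comp (Subgroup.inclusion (N.normalizer_eq_top ▸ le_top :
    H ≤ Subgroup.normalizer N))
  refine ⟨(MulAut.congr e).toMonoidHom.comp (ψ.comp f.symm.toMonoidHom), ?_,
    ⟨(SemidirectProduct.mulEquivSubgroup hcomp).symm.trans (SemidirectProduct.congr' e f)⟩⟩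
  have hψ : Function.Injective ψ := by
    rw [injective_iff_map_eq_one]
    intro x hx
    refine Subtype.ext (Subgroup.eq_one_of_forall_conj_eq hc hd x.2 fun n hn => ?_)
    exact congrArg Subtype.val (DFunLike.congr_fun hx ⟨n, hn⟩)
  exact (MulAut.congr e).injective.comp (hψ.comp f.symm.injective)

/-- Let `p > q` be odd primes and let `G = NH` be a group with
`N ≅ ℤ_p × ℤ_p` normal in `G`, `H ≅ D_{2q}` a subgroup, and `C_G(N) = N`.
Then `q` divides `p² - 1`, and any two such groups are isomorphic. -/
theorem stmt11 {p q : ℕ} (hp : p.Prime) (hq : q.Prime) (hpo : Odd p)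
    (hqo : Odd q) (hlt : q < p)
    (G : Type*) [Group G] (N H : Subgroup G) (hG : NHConfig p q G N H)
    (G' : Type*) [Group G'] (N' H' : Subgroup G') (hG' : NHConfig p q G' N' H') :
    q ∣ p ^ 2 - 1 ∧ Nonempty (G ≃* G') := by
  have : Fact p.Prime := ⟨hp⟩
  obtain ⟨φ, hφ, ⟨e⟩⟩ := hG.exists_mulEquiv hp hq hpo hlt
  obtain ⟨φ', hφ', ⟨e'⟩⟩ := hG'.exists_mulEquiv hp hq hpo hlt
  have hV : Module.finrank (ZMod p) (ZMod p × ZMod p) = 2 := by simp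
  obtain ⟨ρ, hρ, hρφ⟩ := exists_injective_linear_action (p := p) φ hφ
  obtain ⟨ρ', hρ', hρφ'⟩ := exists_injective_linear_action (p := p) φ' hφ'
  obtain ⟨hdvd, α, L, hL⟩ :=
    DihedralGroup.exists_mulEquiv_linearEquiv hq hqo hlt hV hV ρ hρ ρ' hρ'
  refine ⟨hdvd, ⟨(e.trans (SemidirectProduct.congr
    (AddEquiv.toMultiplicative L.toAddEquiv) α fun d => ?_)).trans e'.symm⟩⟩
  ext x : 1
  have := hL d x.toAdd
  rw [hρφ, hρφ'] at this
  exact congrArg Multiplicative.ofAdd this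
end
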